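/- The simplicial complex C_3 obtained by gluing 3 disjoint copies of X̄ along A is constructible. -/

import Mathlib

/-- Constructibility of a pure `d`-dimensional simplicial complex (represented as the
finset of its faces), defined recursively: a simplex (the full powerset of its vertex
set) is constructible, and the union of two constructible `d`-dimensional complexes
whose intersection is constructible of dimension `d - 1` is constructible.  Dimensions
are integers so as to allow the `(-1)`-dimensional complex `{∅}`. -/
inductive Constructible {V : Type*} [DecidableEq V] : Finset (Finset V) → ℤ → Prop
  | simplex (F : Finset V) : Constructible F.powerset ((F.card : ℤ) - 1)
  | union {Δ₁ Δ₂ : Finset (Finset V)} {d : ℤ} :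
      Constructible Δ₁ d → Constructible Δ₂ d → Constructible (Δ₁ ∩ Δ₂) (d - 1) →
      Constructible (Δ₁ ∪ Δ₂) d

/-- The simplicial complex generated by a list of facets. -/
def gen (L : List (Finset ℕ)) : Finset (Finset ℕ) :=
  L.toFinset.biUnion Finset.powerset

/-- The simplicial complex `X̄` on vertices `{0,…,9}` with fourteen facets. -/
def Xbar : Finset (Finset ℕ) :=
  gen [{1,2,4,9},{1,2,6,9},{1,5,6,9},{1,5,8,9},{1,4,8,9},{1,4,5,8},{1,4,5,7},
       {4,5,7,8},{1,2,5,6},{0,1,2,5},{0,2,5,6},{0,1,2,3},{1,2,3,4},{1,3,4,7}]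

/-- The map on vertices defining the `i`-th copy of `X̄` in the glued complex `C_N`:
vertices of `A` (i.e. those in `{0,2,3,4,6,7,8}`) are fixed, and each vertex
`v ∈ {1,5,9}` is sent to `(i, v)`. -/
def glueVertex (i : ℕ) (v : ℕ) : ℕ ⊕ (ℕ × ℕ) :=
  if v = 1 ∨ v = 5 ∨ v = 9 then Sum.inr (i, v) else Sum.inl v

/-- The image `φ_i(σ)` of a face `σ` of `X̄` in the `i`-th copy of `X̄`. -/
def phi (i : ℕ) (σ : Finset ℕ) : Finset (ℕ ⊕ (ℕ × ℕ)) :=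
  σ.image (glueVertex i)

/-- The simplicial complex `C_N` obtained by gluing `N` disjoint copies of `X̄` along `A`. -/
def C (N : ℕ) : Finset (Finset (ℕ ⊕ (ℕ × ℕ))) :=
  (Finset.Icc 1 N).biUnion (fun i => Xbar.image (phi i))

/-!
The listed orders of the facets of `X̄` and of `A` are shellings, and shellable complexes are
constructible: a new facet meets the previous ones in a nonempty union of its own codimension-one
faces.  Since `A` is what is left of `X̄` after deleting `1`, `5` and `9`, any two copies of `X̄`
meet exactly in `A`, which has dimension one less, so the copies can be attached one at a time.
-/

section Constructibility

variable {V : Type*} [DecidableEq V]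

theorem Constructible.powerset {F : Finset V} {d : ℤ} (hF : (F.card : ℤ) = d + 1) :
    Constructible F.powerset d := by
  rw [eq_sub_of_add_eq hF.symm]
  exact .simplex F

theorem Constructible.image {W : Type*} [DecidableEq W] {f : V → W}
    (hf : Function.Injective f) {Δ : Finset (Finset V)} {d : ℤ} (h : Constructible Δ d) :
    Constructible (Δ.image (Finset.image f)) d := by
  induction h with
  | simplex F =>
    rw [← Finset.powerset_image, ← Finset.card_image_of_injective F hf]
    exact .simplex (F.image f)
  | union _ _ _ ih₁ ih₂ ih =>
    rw [Finset.image_inter _ _ (Finset.image_injective hf)] at ih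
    rw [Finset.image_union]
    exact .union ih₁ ih₂ ih

theorem Constructible.biUnion_of_pairwise_inter_eq {ι : Type*} {s : Finset ι} (hs : s.Nonempty)
    {Δ : ι → Finset (Finset V)} {Γ : Finset (Finset V)} {d : ℤ}
    (hΔ : ∀ i ∈ s, Constructible (Δ i) d) (hΓ : Constructible Γ (d - 1))
    (hinter : (s : Set ι).Pairwise fun i j => Δ i ∩ Δ j = Γ) :
    Constructible (s.biUnion Δ) d := by
  classical
  induction hs using Finset.Nonempty.cons_induction with
  | singleton i => simpa using hΔ i
  | cons i s hi hs ih =>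
    rw [Finset.cons_eq_insert] at hΔ hinter ⊢
    have hmeet : Δ i ∩ s.biUnion Δ = Γ := by
      have hi_inter : ∀ j ∈ s, Δ i ∩ Δ j = Γ := fun j hj =>
        hinter (Finset.mem_insert_self i s) (Finset.mem_insert_of_mem hj) fun h => hi (h ▸ hj)
      rw [Finset.inter_biUnion, Finset.biUnion_congr rfl hi_inter, ← Finset.sup_eq_biUnion,
        Finset.sup_const hs]
    rw [Finset.biUnion_insert]
    refine .union (hΔ i (Finset.mem_insert_self i s)) (ih ?_ ?_) (hmeet ▸ hΓ)
    · exact fun j hj => hΔ j (Finset.mem_insert_of_mem hj)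
    · exact hinter.mono (Finset.coe_subset.2 (Finset.subset_insert i s))

theorem Constructible.biUnion_powerset_erase {S F : Finset V} {d : ℤ} (hS : S.Nonempty)
    (hSF : S ⊆ F) (hF : (F.card : ℤ) = d + 2) :
    Constructible (S.biUnion fun v => (F.erase v).powerset) d := by
  have card_erase {F : Finset V} {v : V} {d : ℤ} (hv : v ∈ F) (hF : (F.card : ℤ) = d + 1) :
      ((F.erase v).card : ℤ) = d := by
    have := Finset.card_erase_add_one hv
    omega
  induction hS using Finset.Nonempty.cons_induction generalizing F d with
  | singleton v =>
    rw [Finset.singleton_biUnion]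
    exact .powerset (card_erase (Finset.singleton_subset_iff.1 hSF) (by omega))
  | cons v S hv _ ih =>
    rw [Finset.cons_eq_insert, Finset.insert_subset_iff] at hSF
    obtain ⟨hvF, hSF⟩ := hSF
    have hcard : ((F.erase v).card : ℤ) = d + 1 := card_erase hvF (by omega)
    have hmeet : ((F.erase v).powerset ∩ S.biUnion fun w => (F.erase w).powerset) =
        S.biUnion fun w => ((F.erase v).erase w).powerset := by
      rw [Finset.inter_biUnion]
      refine Finset.biUnion_congr rfl fun w _ => ?_
      ext σ
      simp only [Finset.mem_inter, Finset.mem_powerset, Finset.subset_erase]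
      tauto
    rw [Finset.cons_eq_insert, Finset.biUnion_insert]
    refine .union (.powerset hcard) (ih hSF hF) ?_
    rw [hmeet]
    exact ih (Finset.subset_erase.2 ⟨hSF, hv⟩) (by omega)

end Constructibility

section Shelling

variable {V ι : Type*} [DecidableEq V]

theorem powerset_inter_biUnion_powerset {s : Finset ι} {F : ι → Finset V} {G : Finset V}
    (hG : ∀ i ∈ s, ∃ v ∈ G \ F i, ∃ k ∈ s, G.erase v ⊆ F k) :
    (G.powerset ∩ s.biUnion fun i => (F i).powerset) =
      {v ∈ G | ∃ k ∈ s, G.erase v ⊆ F k}.biUnion fun v => (G.erase v).powerset := by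
  ext σ
  simp only [Finset.mem_inter, Finset.mem_powerset, Finset.mem_biUnion, Finset.mem_filter]
  constructor
  · rintro ⟨hσG, i, hi, hσi⟩
    obtain ⟨v, hv, hk⟩ := hG i hi
    obtain ⟨hvG, hvi⟩ := Finset.mem_sdiff.1 hv
    exact ⟨v, ⟨hvG, hk⟩, Finset.subset_erase.2 ⟨hσG, fun hvσ => hvi (hσi hvσ)⟩⟩
  · rintro ⟨v, ⟨-, k, hk, hvk⟩, hσ⟩
    exact ⟨hσ.trans (Finset.erase_subset v G), k, hk, hσ.trans hvk⟩

variable [LinearOrder ι]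

/-- The family of facets `F`, indexed by `s` in increasing order, is a shelling.  The condition says
that the intersection of each facet `F j` with an earlier one is contained in a codimension-one face
of `F j` shared with some earlier `F k`; purity is not part of the definition. -/
def IsShelling (s : Finset ι) (F : ι → Finset V) : Prop :=
  ∀ j ∈ s, ∀ i ∈ s, i < j → ∃ v ∈ F j \ F i, ∃ k ∈ s, k < j ∧ (F j).erase v ⊆ F k

instance (s : Finset ι) (F : ι → Finset V) : Decidable (IsShelling s F) := by
  unfold IsShelling
  infer_instance

theorem IsShelling.constructible {s : Finset ι} {F : ι → Finset V} {d : ℤ}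
    (hF : IsShelling s F) (hs : s.Nonempty) (hcard : ∀ i ∈ s, ((F i).card : ℤ) = d + 1) :
    Constructible (s.biUnion fun i => (F i).powerset) d := by
  induction s using Finset.induction_on_max with
  | empty => exact absurd hs Finset.not_nonempty_empty
  | insert j s hlt ih =>
    have hj : ((F j).card : ℤ) = d + 1 := hcard j (Finset.mem_insert_self j s)
    rw [Finset.biUnion_insert]
    obtain rfl | hs := s.eq_empty_or_nonempty
    · simpa using Constructible.powerset hj
    have hlast : ∀ i ∈ s, ∃ v ∈ F j \ F i, ∃ k ∈ s, (F j).erase v ⊆ F k := fun i hi => by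
      obtain ⟨v, hv, k, hk, hkj, hvk⟩ :=
        hF j (Finset.mem_insert_self j s) i (Finset.mem_insert_of_mem hi) (hlt i hi)
      exact ⟨v, hv, k, Finset.mem_of_mem_insert_of_ne hk hkj.ne, hvk⟩
    have hinit : IsShelling s F := fun l hl i hi hil => by
      obtain ⟨v, hv, k, hk, hkl, hvk⟩ :=
        hF l (Finset.mem_insert_of_mem hl) i (Finset.mem_insert_of_mem hi) hil
      exact ⟨v, hv, k, Finset.mem_of_mem_insert_of_ne hk (hkl.trans (hlt l hl)).ne, hkl, hvk⟩
    refine .union (.powerset hj) (ih hinit hs fun i hi => hcard i (Finset.mem_insert_of_mem hi)) ?_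
    rw [powerset_inter_biUnion_powerset hlast]
    refine .biUnion_powerset_erase ?_ (Finset.filter_subset _ _) (by omega)
    obtain ⟨i, hi⟩ := hs
    obtain ⟨v, hv, hk⟩ := hlast i hi
    exact ⟨v, Finset.mem_filter.2 ⟨(Finset.mem_sdiff.1 hv).1, hk⟩⟩

end Shelling

section GeneratedComplex

theorem mem_gen {L : List (Finset ℕ)} {σ : Finset ℕ} : σ ∈ gen L ↔ ∃ F ∈ L, σ ⊆ F := by
  simp [gen]

theorem gen_subset_gen {L M : List (Finset ℕ)} (h : ∀ F ∈ L, ∃ G ∈ M, F ⊆ G) :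
    gen L ⊆ gen M := fun σ hσ => by
  obtain ⟨F, hF, hσF⟩ := mem_gen.1 hσ
  obtain ⟨G, hG, hFG⟩ := h F hF
  exact mem_gen.2 ⟨G, hG, hσF.trans hFG⟩

theorem filter_disjoint_gen (L : List (Finset ℕ)) (S : Finset ℕ) :
    {σ ∈ gen L | Disjoint σ S} = gen (L.map (· \ S)) := by
  ext σ
  simp only [Finset.mem_filter, mem_gen, List.mem_map, exists_exists_and_eq_and,
    Finset.subset_sdiff]
  tauto

theorem gen_constructible {L : List (Finset ℕ)} {d : ℤ} (hL : IsShelling Finset.univ L.get)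
    (hne : L ≠ []) (hcard : ∀ F ∈ L, (F.card : ℤ) = d + 1) : Constructible (gen L) d := by
  have hgen : gen L = Finset.univ.biUnion fun i => (L.get i).powerset := by
    ext σ
    simp [mem_gen, List.exists_mem_iff_get]
  rw [hgen]
  refine hL.constructible ?_ fun i _ => hcard _ (L.get_mem i)
  exact ⟨⟨0, List.length_pos_iff.2 hne⟩, Finset.mem_univ _⟩

end GeneratedComplex

/-- The vertices of `X̄` outside `A`, of which `C_N` has one copy for each copy of `X̄`. -/
def copiedVertices : Finset ℕ :=
  {1, 5, 9}

/-- The subcomplex `A` of `X̄` along which the copies of `X̄` are glued. -/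
def gluingComplex : Finset (Finset ℕ) :=
  gen [{0,2,6},{0,2,3},{2,3,4},{3,4,7},{4,7,8}]

theorem Xbar_constructible : Constructible Xbar 3 :=
  gen_constructible (by decide) (by decide) (by decide)

theorem gluingComplex_constructible : Constructible gluingComplex 2 :=
  gen_constructible (by decide) (by decide) (by decide)

theorem filter_disjoint_Xbar : {σ ∈ Xbar | Disjoint σ copiedVertices} = gluingComplex := by
  rw [Xbar, filter_disjoint_gen]
  exact (gen_subset_gen (by decide)).antisymm (gen_subset_gen (by decide))

theorem glueVertex_of_mem {v : ℕ} (hv : v ∈ copiedVertices) (i : ℕ) :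
    glueVertex i v = Sum.inr (i, v) :=
  if_pos (by simpa [copiedVertices] using hv)

theorem glueVertex_of_notMem {v : ℕ} (hv : v ∉ copiedVertices) (i : ℕ) :
    glueVertex i v = Sum.inl v :=
  if_neg (by simpa [copiedVertices] using hv)

theorem glueVertex_injective (i : ℕ) : Function.Injective (glueVertex i) :=
  Function.LeftInverse.injective (g := Sum.elim id Prod.snd) fun v => by
    unfold glueVertex
    split_ifs <;> rfl

theorem phi_of_disjoint {σ : Finset ℕ} (hσ : Disjoint σ copiedVertices) (i : ℕ) :
    phi i σ = σ.image Sum.inl :=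
  Finset.image_congr fun _ hv => glueVertex_of_notMem (Finset.disjoint_left.1 hσ hv) i

theorem disjoint_of_phi_eq_phi {i j : ℕ} (hij : i ≠ j) {σ τ : Finset ℕ}
    (h : phi i σ = phi j τ) : Disjoint σ copiedVertices := by
  refine Finset.disjoint_left.2 fun v hvσ hv => hij ?_
  have hmem : Sum.inr (i, v) ∈ phi j τ := by
    rw [← h, ← glueVertex_of_mem hv i]
    exact Finset.mem_image_of_mem _ hvσ
  obtain ⟨w, -, hw⟩ := Finset.mem_image.1 hmem
  by_cases hwc : w ∈ copiedVertices
  · rw [glueVertex_of_mem hwc, Sum.inr.injEq, Prod.mk.injEq] at hw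
    exact hw.1.symm
  · rw [glueVertex_of_notMem hwc] at hw
    exact absurd hw Sum.inl_ne_inr

theorem image_phi_inter_image_phi {i j : ℕ} (hij : i ≠ j) (Δ : Finset (Finset ℕ)) :
    Δ.image (phi i) ∩ Δ.image (phi j) =
      {σ ∈ Δ | Disjoint σ copiedVertices}.image (Finset.image Sum.inl) := by
  ext ρ
  simp only [Finset.mem_inter, Finset.mem_image, Finset.mem_filter]
  constructor
  · rintro ⟨⟨σ, hσ, rfl⟩, τ, -, hτ⟩
    have hdisj := disjoint_of_phi_eq_phi hij hτ.symm
    exact ⟨σ, ⟨hσ, hdisj⟩, (phi_of_disjoint hdisj i).symm⟩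
  · rintro ⟨σ, ⟨hσ, hdisj⟩, rfl⟩
    exact ⟨⟨σ, hσ, phi_of_disjoint hdisj i⟩, σ, hσ, phi_of_disjoint hdisj j⟩

theorem C3_constructible_general {N : ℕ} (hN : 1 ≤ N) : Constructible (C N) 3 := by
  refine .biUnion_of_pairwise_inter_eq (Finset.nonempty_Icc.2 hN)
    (Γ := gluingComplex.image (Finset.image Sum.inl)) ?_ ?_ ?_
  · exact fun i _ => Xbar_constructible.image (glueVertex_injective i)
  · exact gluingComplex_constructible.image Sum.inl_injective
  · intro i _ j _ hij
    rw [image_phi_inter_image_phi hij, filter_disjoint_Xbar]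

/-- The simplicial complex `C_3`, obtained by gluing 3 disjoint copies of `X̄` along `A`,
is constructible (of dimension 3). -/
theorem C3_constructible : Constructible (C 3) 3 :=
  C3_constructible_general (by norm_num)
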